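/- Suppose k(n)/√n → ∞ and one of the three regimes holds: (Flat) n^{3/2}V(A)/k → 0 and m/(k n^{1/2}) → c > 0; (Intermediate) n^{3/2}V(A)/k → λ > 0 and m/(k n^{1/2}) → c > 0; or (Hilly) n^{3/2}V(A)/k → ∞ and m/(V(A)n²) → c > 0. Then under both the standard distribution ST(m,n) and the planted distribution PL_A(m,n), the statistic T(Z) = Σ_i a_i q_i³ satisfies E[T] − kn²/m² → 0 and Var[T] → 0 as n → ∞. -/

import Mathlib

/-!
The occupancies `y` of `N` uniform balls in `n` bins are handled through the linear functional
`multE`, which adds one ball at a time; `hasSum_stProb` and `hasSum_plProb` identify it with the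
explicit multinomial probabilities, planted configurations being `y + a` with `N = m - k`. Under
both distributions the statistic is `w³ Σ a_i (x_i + b_i)³`, where `w = n / m`, `x_i` is the
centred occupancy and `b_i` is `0` (standard) or `a_i - k / n` (planted).

*Variance.* Each summand is an increasing function of a single occupancy, and occupancies of
distinct bins are negatively correlated through increasing functions (`multE_neg_corr`, induction
on the number of balls). Hence the variance is at most its diagonal part (`multE_var_le`), which
the bounds `O(μ)`, `O(μ²)`, `O(μ³)` on the 2nd, 4th and 6th central moments, `μ = m / n`, control.

*Mean.* The first three central moments are exact, so the mean is explicit (`cubT_mean`).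

*Regimes.* All three regimes give a constant `C` with `k √n ≤ C m` and `n² V(A) ≤ C m`
(`regime_bounds`). As `Σ (a_i - k / n)² = n V(A) ≤ C μ`, these two inequalities make every error
term `O(n / m + 1 / n)` (`finite_bounds`), and `m / n → ∞` because `k / √n → ∞`.
-/

open Finset Filter Topology

/-- Probability of configuration `z` of `m` balls in `n` bins under the standard
(uniform multinomial) distribution ST(m,n). -/
noncomputable def stProb (n m : ℕ) (z : Fin n → ℕ) : ℝ :=
  if ∑ i, z i = m then
    ((Nat.factorial m : ℝ) / ∏ i, (Nat.factorial (z i) : ℝ)) * ((n : ℝ))⁻¹ ^ m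
  else 0

/-- Probability of configuration `z` of `m` balls in `n` bins under the planted
distribution PL_A(m,n) with planting `a`. -/
noncomputable def plProb (n m : ℕ) (a : Fin n → ℕ) (z : Fin n → ℕ) : ℝ :=
  if (∑ i, z i = m) ∧ (∀ i, a i ≤ z i) then
    ((Nat.factorial (m - ∑ i, a i) : ℝ) / ∏ i, (Nat.factorial (z i - a i) : ℝ)) *
      ((n : ℝ))⁻¹ ^ (m - ∑ i, a i)
  else 0

/-- Expectation of a statistic `T` with respect to a probability function `p` on
configurations. -/
noncomputable def expec {n : ℕ} (p : (Fin n → ℕ) → ℝ) (T : (Fin n → ℕ) → ℝ) : ℝ :=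
  ∑' z : Fin n → ℕ, p z * T z

/-- Variance of a statistic `T` with respect to a probability function `p`. -/
noncomputable def varOf {n : ℕ} (p : (Fin n → ℕ) → ℝ) (T : (Fin n → ℕ) → ℝ) : ℝ :=
  ∑' z : Fin n → ℕ, p z * (T z - expec p T) ^ 2

/-- Probability of a set `s` of configurations with respect to a probability
function `p`. -/
noncomputable def probOf {n : ℕ} (p : (Fin n → ℕ) → ℝ) (s : Set (Fin n → ℕ)) : ℝ :=
  ∑' z : Fin n → ℕ, Set.indicator s p z

/-- `V(A) = (Σ_i a_i²)/n − k²/n²` where `k = Σ_i a_i`. -/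
noncomputable def plantV (n : ℕ) (a : Fin n → ℕ) : ℝ :=
  (∑ i, (a i : ℝ) ^ 2) / n - ((∑ i, (a i : ℝ)) / n) ^ 2

/-- `q_i = (n/m)(z_i − m/n)`. -/
noncomputable def qStat (n m : ℕ) (z : Fin n → ℕ) (i : Fin n) : ℝ :=
  ((n : ℝ) / m) * ((z i : ℝ) - (m : ℝ) / n)

/-- The Hilly-regime statistic `H_A(Z) = Σ_i a_i q_i`. -/
noncomputable def HStat (n m : ℕ) (a : Fin n → ℕ) (z : Fin n → ℕ) : ℝ :=
  ∑ i, (a i : ℝ) * qStat n m z i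

/-- The Flat-regime statistic `F_A(Z) = Σ_i a_i q_i²`. -/
noncomputable def FStat (n m : ℕ) (a : Fin n → ℕ) (z : Fin n → ℕ) : ℝ :=
  ∑ i, (a i : ℝ) * qStat n m z i ^ 2

/-- The Intermediate-regime statistic `I_A(Z) = Σ_i a_i q_i − (1/2) Σ_i a_i q_i²`. -/
noncomputable def IStat (n m : ℕ) (a : Fin n → ℕ) (z : Fin n → ℕ) : ℝ :=
  HStat n m a z - (1/2) * FStat n m a z

/-- The standard normal cumulative distribution function `Φ`. -/
noncomputable def stdNormalCDF (x : ℝ) : ℝ :=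
  ∫ t in Set.Iic x, Real.exp (-t ^ 2 / 2) / Real.sqrt (2 * Real.pi)

/-- Total variation distance `TV_A(m,n)` between ST(m,n) and PL_A(m,n). -/
noncomputable def tvDist (n m : ℕ) (a : Fin n → ℕ) : ℝ :=
  (1/2) * ∑' z : Fin n → ℕ, |stProb n m z - plProb n m a z|

/-- The Flat regime: `n^{3/2} V(A)/k → 0` and `m/(k n^{1/2}) → c`. -/
def FlatRegime (A : (n : ℕ) → Fin n → ℕ) (m k : ℕ → ℕ) (c : ℝ) : Prop :=
  Tendsto (fun n : ℕ => (n : ℝ) ^ ((3 : ℝ)/2) * plantV n (A n) / (k n : ℝ)) atTop (𝓝 0) ∧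
  Tendsto (fun n : ℕ => (m n : ℝ) / ((k n : ℝ) * Real.sqrt n)) atTop (𝓝 c)

/-- The Intermediate regime: `n^{3/2} V(A)/k → λ` and `m/(k n^{1/2}) → c`. -/
def IntermediateRegime (A : (n : ℕ) → Fin n → ℕ) (m k : ℕ → ℕ) (lam c : ℝ) : Prop :=
  Tendsto (fun n : ℕ => (n : ℝ) ^ ((3 : ℝ)/2) * plantV n (A n) / (k n : ℝ)) atTop (𝓝 lam) ∧
  Tendsto (fun n : ℕ => (m n : ℝ) / ((k n : ℝ) * Real.sqrt n)) atTop (𝓝 c)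

/-- The Hilly regime: `n^{3/2} V(A)/k → ∞` and `m/(V(A) n²) → c`. -/
def HillyRegime (A : (n : ℕ) → Fin n → ℕ) (m k : ℕ → ℕ) (c : ℝ) : Prop :=
  Tendsto (fun n : ℕ => (n : ℝ) ^ ((3 : ℝ)/2) * plantV n (A n) / (k n : ℝ)) atTop atTop ∧
  Tendsto (fun n : ℕ => (m n : ℝ) / (plantV n (A n) * (n : ℝ) ^ 2)) atTop (𝓝 c)

/-- One of the three regimes holds (with its positive constants). -/
def SomeRegime (A : (n : ℕ) → Fin n → ℕ) (m k : ℕ → ℕ) : Prop :=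
  (∃ c : ℝ, 0 < c ∧ FlatRegime A m k c) ∨
  (∃ lam c : ℝ, 0 < lam ∧ 0 < c ∧ IntermediateRegime A m k lam c) ∨
  (∃ c : ℝ, 0 < c ∧ HillyRegime A m k c)


/-! ### The multinomial expectation as a linear functional -/

/-- Expectation of a statistic of `N` balls thrown independently and uniformly into `n` bins,
built by adding one ball at a time. For `n = 0` and `N > 0` it is zero. -/
noncomputable def multE (n : ℕ) : ℕ → (((Fin n → ℕ) → ℝ) →ₗ[ℝ] ℝ)
  | 0 => LinearMap.proj 0
  | N + 1 => ((n : ℝ)⁻¹) • ∑ i : Fin n,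
      (multE n N).comp (LinearMap.funLeft ℝ ℝ (fun z : Fin n → ℕ => z + Pi.single i 1))

lemma multE_zero (n : ℕ) (f : (Fin n → ℕ) → ℝ) : multE n 0 f = f 0 := rfl

lemma multE_succ (n N : ℕ) (f : (Fin n → ℕ) → ℝ) :
    multE n (N + 1) f = (n : ℝ)⁻¹ * ∑ i, multE n N (fun z => f (z + Pi.single i 1)) := by
  simp only [multE, LinearMap.smul_apply, LinearMap.sum_apply, smul_eq_mul]
  rfl

lemma multE_mono (n N : ℕ) {f g : (Fin n → ℕ) → ℝ} (h : ∀ z, f z ≤ g z) :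
    multE n N f ≤ multE n N g := by
  induction N generalizing f g with
  | zero => simpa [multE_zero] using h 0
  | succ N ih =>
    rw [multE_succ, multE_succ]
    gcongr with i
    exact ih fun z => h _

lemma multE_const (n N : ℕ) (hn : 0 < n) (c : ℝ) : multE n N (fun _ => c) = c := by
  induction N with
  | zero => rfl
  | succ N ih =>
    rw [multE_succ]
    simp only [ih, Finset.sum_const, Finset.card_univ, Fintype.card_fin, nsmul_eq_mul]
    field_simp

lemma multE_cmul (n N : ℕ) (c : ℝ) (f : (Fin n → ℕ) → ℝ) :
    multE n N (fun z => c * f z) = c * multE n N f :=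
  (multE n N).map_smul c f

lemma multE_add (n N : ℕ) (f g : (Fin n → ℕ) → ℝ) :
    multE n N (fun z => f z + g z) = multE n N f + multE n N g :=
  (multE n N).map_add f g

lemma multE_sum (n N : ℕ) {ι : Type*} (s : Finset ι) (f : ι → (Fin n → ℕ) → ℝ) :
    multE n N (fun z => ∑ i ∈ s, f i z) = ∑ i ∈ s, multE n N (f i) := by
  rw [← map_sum]
  congr 1
  ext z
  simp

/-! ### Identification with the explicit probability functions -/

/-- Conditioning on the bin of the last ball. -/
lemma stProb_succ (n N : ℕ) (z : Fin n → ℕ) :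
    stProb n (N + 1) z =
      (n : ℝ)⁻¹ * ∑ i, if 1 ≤ z i then stProb n N (z - Pi.single i 1) else 0 := by
  by_cases hz : ∑ i, z i = N + 1
  · have key : ∀ i, (if 1 ≤ z i then stProb n N (z - Pi.single i 1) else 0) =
        (z i : ℝ) * (((N.factorial : ℝ) / ∏ j, ((z j).factorial : ℝ)) * (n : ℝ)⁻¹ ^ N) := by
      intro i
      by_cases hi : 1 ≤ z i
      · have hsum : ∑ j, (z - Pi.single i 1 : Fin n → ℕ) j = N := by
          have h1 : z = (z - Pi.single i 1) + Pi.single i 1 := by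
            funext j
            by_cases hj : j = i
            · subst hj; simp; omega
            · simp [hj]
          have h2 : ∑ j, z j = ∑ j, (z - Pi.single i 1 : Fin n → ℕ) j + 1 := by
            conv_lhs => rw [h1]
            simp [Finset.sum_add_distrib]
          omega
        have hprod : (∏ j, ((z j).factorial : ℝ)) =
            (z i : ℝ) * ∏ j, (((z - Pi.single i 1 : Fin n → ℕ) j).factorial : ℝ) := by
          rw [← Finset.mul_prod_erase _ _ (Finset.mem_univ i)]
          conv_rhs => rw [← Finset.mul_prod_erase _ _ (Finset.mem_univ i)]
          have h3 : ∏ x ∈ univ.erase i, (((z - Pi.single i 1 : Fin n → ℕ) x).factorial : ℝ) =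
              ∏ x ∈ univ.erase i, ((z x).factorial : ℝ) := by
            refine Finset.prod_congr rfl fun x hx => ?_
            simp [Finset.ne_of_mem_erase hx]
          rw [h3, ← mul_assoc]
          congr 1
          simp only [Pi.sub_apply, Pi.single_eq_same]
          exact_mod_cast (Nat.mul_factorial_pred (by omega)).symm
        have hpos : (∏ j, (((z - Pi.single i 1 : Fin n → ℕ) j).factorial : ℝ)) ≠ 0 :=
          Finset.prod_ne_zero_iff.2 fun j _ => by positivity
        have hzi : (z i : ℝ) ≠ 0 := by positivity
        rw [if_pos hi, stProb, if_pos hsum, hprod]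
        field_simp
      · have : z i = 0 := by omega
        simp [this]
    simp_rw [key]
    rw [← Finset.sum_mul, stProb, if_pos hz]
    have : (∑ i, (z i : ℝ)) = N + 1 := by exact_mod_cast hz
    rw [this, Nat.factorial_succ]
    push_cast
    ring
  · rw [stProb, if_neg hz]
    symm
    apply mul_eq_zero_of_right
    refine Finset.sum_eq_zero fun i _ => ?_
    split_ifs with hi
    · rw [stProb, if_neg]
      intro h
      apply hz
      have h1 : z = (z - Pi.single i 1) + Pi.single i 1 := by
        funext j
        by_cases hj : j = i
        · subst hj; simp; omega
        · simp [hj]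
      have h2 : ∑ j, z j = ∑ j, (z - Pi.single i 1 : Fin n → ℕ) j + 1 := by
        conv_lhs => rw [h1]
        simp [Finset.sum_add_distrib]
      omega
    · rfl

lemma hasSum_stProb (n N : ℕ) (f : (Fin n → ℕ) → ℝ) :
    HasSum (fun z => stProb n N z * f z) (multE n N f) := by
  induction N generalizing f with
  | zero =>
    rw [multE_zero]
    have h0 : stProb n 0 (0 : Fin n → ℕ) * f 0 = f 0 := by simp [stProb]
    rw [← h0]
    refine hasSum_single (0 : Fin n → ℕ) fun z hz => ?_
    rw [stProb, if_neg, zero_mul]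
    intro h
    apply hz
    funext i
    exact (Finset.sum_eq_zero_iff.1 h) i (Finset.mem_univ i)
  | succ N ih =>
    rw [multE_succ]
    have hi : ∀ i : Fin n, HasSum
        (fun z => (if 1 ≤ z i then stProb n N (z - Pi.single i 1) else 0) * f z)
        (multE n N (fun z => f (z + Pi.single i 1))) := by
      intro i
      have hinj : Function.Injective (fun z : Fin n → ℕ => z + Pi.single i 1) :=
        add_left_injective _
      rw [← hinj.hasSum_iff]
      · convert ih (fun z => f (z + Pi.single i 1)) using 2 with z
        simp
      · intro z hz
        rw [if_neg, zero_mul]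
        intro h1
        apply hz
        refine ⟨z - Pi.single i 1, ?_⟩
        funext j
        by_cases hj : j = i
        · subst hj; simp; omega
        · simp [hj]
    have h := (hasSum_sum (s := Finset.univ) fun i _ => hi i).mul_left ((n : ℝ)⁻¹)
    have he : (fun z => stProb n (N + 1) z * f z) = fun z => (n : ℝ)⁻¹ * ∑ i,
        (if 1 ≤ z i then stProb n N (z - Pi.single i 1) else 0) * f z := by
      funext z
      rw [stProb_succ, ← Finset.sum_mul, mul_assoc]
    rw [he]
    exact h

lemma hasSum_plProb (n m : ℕ) (a : Fin n → ℕ) (ha : ∑ i, a i ≤ m) (f : (Fin n → ℕ) → ℝ) :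
    HasSum (fun z => plProb n m a z * f z)
      (multE n (m - ∑ i, a i) (fun y => f (y + a))) := by
  have hinj : Function.Injective (fun z : Fin n → ℕ => z + a) := add_left_injective _
  rw [← hinj.hasSum_iff]
  · convert hasSum_stProb n (m - ∑ i, a i) (fun y => f (y + a)) using 2 with y
    simp only [Function.comp, plProb, stProb, Pi.add_apply, Finset.sum_add_distrib,
      Nat.add_sub_cancel, Nat.le_add_left, implies_true, and_true]
    congr 1
    have : (∑ i, y i + ∑ i, a i = m) ↔ (∑ i, y i = m - ∑ i, a i) := by omega
    simp only [this]
  · intro z hz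
    rw [plProb, if_neg, zero_mul]
    rintro ⟨-, h⟩
    apply hz
    refine ⟨z - a, ?_⟩
    funext j
    simp [h j]

/-! ### Marginals and negative correlation -/

/-- Law of total expectation for one bin, conditioning on the last ball. -/
lemma multE_marg (n N : ℕ) (hn : 0 < n) (i : Fin n) (g : ℕ → ℝ) :
    multE n (N + 1) (fun z => g (z i)) =
      (n : ℝ)⁻¹ * multE n N (fun z => g (z i + 1)) +
        (1 - (n : ℝ)⁻¹) * multE n N (fun z => g (z i)) := by
  have hn' : (n : ℝ) ≠ 0 := by positivity
  rw [multE_succ, ← Finset.add_sum_erase _ _ (Finset.mem_univ i)]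
  have h : ∀ j ∈ univ.erase i, multE n N (fun z => g ((z + Pi.single j 1 : Fin n → ℕ) i)) =
      multE n N (fun z => g (z i)) := by
    intro j hj
    simp [(Finset.ne_of_mem_erase hj).symm]
  rw [Finset.sum_congr rfl h]
  simp only [Finset.sum_const, Finset.card_erase_of_mem (Finset.mem_univ i), Finset.card_univ,
    Fintype.card_fin, nsmul_eq_mul, Nat.cast_pred hn, Pi.add_apply, Pi.single_eq_same]
  field_simp

/-- Increasing functions of the occupancies of two distinct bins are negatively correlated. -/
lemma multE_neg_corr (n N : ℕ) {i j : Fin n} (hij : i ≠ j) {f g : ℕ → ℝ}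
    (hf : Monotone f) (hg : Monotone g) :
    multE n N (fun z => f (z i) * g (z j)) ≤
      multE n N (fun z => f (z i)) * multE n N (fun z => g (z j)) := by
  have hn2 : 2 ≤ n := by
    have := Fin.nontrivial_iff_two_le.1 ⟨i, j, hij⟩
    exact this
  have hn' : (n : ℝ) ≠ 0 := by positivity
  induction N generalizing f g with
  | zero => exact le_refl _
  | succ N ih =>
    have hstep : multE n (N + 1) (fun z => f (z i) * g (z j)) =
        (n : ℝ)⁻¹ * multE n N (fun z => f (z i + 1) * g (z j)) +
        (n : ℝ)⁻¹ * multE n N (fun z => f (z i) * g (z j + 1)) +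
        (1 - 2 * (n : ℝ)⁻¹) * multE n N (fun z => f (z i) * g (z j)) := by
      have hj : j ∈ univ.erase i := by simp [hij.symm]
      rw [multE_succ, ← Finset.add_sum_erase _ _ (Finset.mem_univ i),
        ← Finset.add_sum_erase _ _ hj]
      have h : ∀ l ∈ (univ.erase i).erase j,
          multE n N (fun z => f ((z + Pi.single l 1 : Fin n → ℕ) i) *
            g ((z + Pi.single l 1 : Fin n → ℕ) j)) =
            multE n N (fun z => f (z i) * g (z j)) := by
        intro l hl
        have h1 : j ≠ l := (Finset.ne_of_mem_erase hl).symm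
        have h2 : i ≠ l := (Finset.ne_of_mem_erase (Finset.mem_of_mem_erase hl)).symm
        simp [h1, h2]
      rw [Finset.sum_congr rfl h]
      have hc : (((univ.erase i).erase j).card : ℝ) = n - 2 := by
        rw [Finset.card_erase_of_mem hj, Finset.card_erase_of_mem (Finset.mem_univ i)]
        simp only [Finset.card_univ, Fintype.card_fin]
        rw [Nat.sub_sub, Nat.cast_sub hn2]
        norm_num
      simp only [Finset.sum_const, nsmul_eq_mul, hc, Pi.add_apply, Pi.single_eq_same,
        Pi.single_eq_of_ne hij, Pi.single_eq_of_ne hij.symm, add_zero]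
      field_simp
      ring
    rw [hstep, multE_marg n N (by omega) i f, multE_marg n N (by omega) j g]
    have hf1 : Monotone (fun t => f (t + 1)) := fun s t h => hf (by omega)
    have hg1 : Monotone (fun t => g (t + 1)) := fun s t h => hg (by omega)
    have i1 := ih hf1 hg
    have i2 := ih hf hg1
    have i3 := ih hf hg
    have u : multE n N (fun z => f (z i)) ≤ multE n N (fun z => f (z i + 1)) :=
      multE_mono n N fun z => hf (by omega)
    have v : multE n N (fun z => g (z j)) ≤ multE n N (fun z => g (z j + 1)) :=
      multE_mono n N fun z => hg (by omega)
    have hp0 : 0 ≤ (n : ℝ)⁻¹ := by positivity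
    have hp2 : 0 ≤ 1 - 2 * (n : ℝ)⁻¹ := by
      have : (2 : ℝ) ≤ n := by exact_mod_cast hn2
      have h3 : (n : ℝ)⁻¹ ≤ 2⁻¹ := inv_anti₀ (by norm_num) this
      linarith
    generalize (n : ℝ)⁻¹ = p at *
    generalize multE n N (fun z => f (z i)) = F at *
    generalize multE n N (fun z => f (z i + 1)) = F1 at *
    generalize multE n N (fun z => g (z j)) = G at *
    generalize multE n N (fun z => g (z j + 1)) = G1 at *
    have e1 := mul_le_mul_of_nonneg_left i1 hp0
    have e2 := mul_le_mul_of_nonneg_left i2 hp0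
    have e3 := mul_le_mul_of_nonneg_left i3 hp2
    have e4 : 0 ≤ p ^ 2 * ((F1 - F) * (G1 - G)) :=
      mul_nonneg (sq_nonneg p) (mul_nonneg (sub_nonneg.2 u) (sub_nonneg.2 v))
    nlinarith [e1, e2, e3, e4]

/-! ### Central moments of a single occupancy -/

/-- The `r`-th central moment of the occupancy of bin `i` by `N` balls. -/
noncomputable def cMom (n N : ℕ) (i : Fin n) (r : ℕ) : ℝ :=
  multE n N (fun z => ((z i : ℝ) - N * (n : ℝ)⁻¹) ^ r)

lemma cMom_succ (n N : ℕ) (hn : 0 < n) (i : Fin n) (r : ℕ) :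
    cMom n (N + 1) i r = multE n N (fun z =>
      (n : ℝ)⁻¹ * (((z i : ℝ) - N * (n : ℝ)⁻¹) + (1 - (n : ℝ)⁻¹)) ^ r +
      (1 - (n : ℝ)⁻¹) * (((z i : ℝ) - N * (n : ℝ)⁻¹) - (n : ℝ)⁻¹) ^ r) := by
  rw [multE_add, multE_cmul, multE_cmul, cMom,
    multE_marg n N hn i (fun t => ((t : ℝ) - (N + 1 : ℕ) * (n : ℝ)⁻¹) ^ r)]
  congr 3
  · funext z; push_cast; congr 1; ring
  · funext z; push_cast; congr 1; ring

lemma cMom_zero_balls (n : ℕ) (i : Fin n) (r : ℕ) (hr : r ≠ 0) : cMom n 0 i r = 0 := by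
  simp [cMom, multE_zero, hr]

lemma cMom_one (n N : ℕ) (hn : 0 < n) (i : Fin n) : cMom n N i 1 = 0 := by
  induction N with
  | zero => exact cMom_zero_balls n i 1 one_ne_zero
  | succ N ih =>
    rw [cMom_succ n N hn]
    rw [show (fun z : Fin n → ℕ => (n : ℝ)⁻¹ * (((z i : ℝ) - N * (n : ℝ)⁻¹) +
      (1 - (n : ℝ)⁻¹)) ^ 1 + (1 - (n : ℝ)⁻¹) * (((z i : ℝ) - N * (n : ℝ)⁻¹) - (n : ℝ)⁻¹) ^ 1)
      = fun z => ((z i : ℝ) - N * (n : ℝ)⁻¹) ^ 1 from by funext z; ring]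
    exact ih

lemma cMom_two (n N : ℕ) (hn : 0 < n) (i : Fin n) :
    cMom n N i 2 = N * ((n : ℝ)⁻¹ * (1 - (n : ℝ)⁻¹)) := by
  induction N with
  | zero => simp [cMom_zero_balls]
  | succ N ih =>
    rw [cMom_succ n N hn]
    generalize hp : (n : ℝ)⁻¹ = p at *
    rw [show (fun z : Fin n → ℕ => p * (((z i : ℝ) - N * p) + (1 - p)) ^ 2 +
        (1 - p) * (((z i : ℝ) - N * p) - p) ^ 2)
      = fun z => ((z i : ℝ) - N * p) ^ 2 + p * (1 - p) from by funext z; ring,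
      multE_add, multE_const n N hn]
    have : multE n N (fun z => ((z i : ℝ) - N * p) ^ 2) = cMom n N i 2 := by rw [cMom, hp]
    rw [this, ih]; push_cast; ring

lemma cMom_three (n N : ℕ) (hn : 0 < n) (i : Fin n) :
    cMom n N i 3 = N * ((n : ℝ)⁻¹ * (1 - (n : ℝ)⁻¹) * (1 - 2 * (n : ℝ)⁻¹)) := by
  induction N with
  | zero => simp [cMom_zero_balls]
  | succ N ih =>
    have h1 := cMom_one n N hn i
    rw [cMom_succ n N hn]
    simp only [cMom] at ih h1
    generalize hp : (n : ℝ)⁻¹ = p at *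
    rw [show (fun z : Fin n → ℕ => p * (((z i : ℝ) - N * p) + (1 - p)) ^ 3 +
        (1 - p) * (((z i : ℝ) - N * p) - p) ^ 3)
      = fun z => ((z i : ℝ) - N * p) ^ 3 + (3 * (p * (1 - p)) * ((z i : ℝ) - N * p) ^ 1 +
          p * (1 - p) * (1 - 2 * p)) from by funext z; ring,
      multE_add, multE_add, multE_const n N hn, multE_cmul, ih, h1]
    push_cast; ring

lemma cMom_four_succ (n N : ℕ) (hn : 0 < n) (i : Fin n) :
    cMom n (N + 1) i 4 = cMom n N i 4 + 6 * ((n : ℝ)⁻¹ * (1 - (n : ℝ)⁻¹)) * cMom n N i 2 +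
      (n : ℝ)⁻¹ * (1 - (n : ℝ)⁻¹) * ((1 - (n : ℝ)⁻¹) ^ 3 + (n : ℝ)⁻¹ ^ 3) := by
  have h1 := cMom_one n N hn i
  rw [cMom_succ n N hn]
  simp only [cMom] at h1 ⊢
  generalize (n : ℝ)⁻¹ = p at *
  rw [show (fun z : Fin n → ℕ => p * (((z i : ℝ) - N * p) + (1 - p)) ^ 4 +
      (1 - p) * (((z i : ℝ) - N * p) - p) ^ 4)
    = fun z => ((z i : ℝ) - N * p) ^ 4 + (6 * (p * (1 - p)) * ((z i : ℝ) - N * p) ^ 2 +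
        (4 * (p * (1 - p) * (1 - 2 * p)) * ((z i : ℝ) - N * p) ^ 1 +
        p * (1 - p) * ((1 - p) ^ 3 + p ^ 3))) from by funext z; ring,
    multE_add, multE_add, multE_add, multE_const n N hn, multE_cmul, multE_cmul, h1]
  ring

lemma cMom_six_succ (n N : ℕ) (hn : 0 < n) (i : Fin n) :
    cMom n (N + 1) i 6 = cMom n N i 6 + 15 * ((n : ℝ)⁻¹ * (1 - (n : ℝ)⁻¹)) * cMom n N i 4 +
      20 * ((n : ℝ)⁻¹ * (1 - (n : ℝ)⁻¹) * (1 - 2 * (n : ℝ)⁻¹)) * cMom n N i 3 +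
      15 * ((n : ℝ)⁻¹ * (1 - (n : ℝ)⁻¹) * ((1 - (n : ℝ)⁻¹) ^ 3 + (n : ℝ)⁻¹ ^ 3)) *
        cMom n N i 2 +
      (n : ℝ)⁻¹ * (1 - (n : ℝ)⁻¹) * ((1 - (n : ℝ)⁻¹) ^ 5 + (n : ℝ)⁻¹ ^ 5) := by
  have h1 := cMom_one n N hn i
  rw [cMom_succ n N hn]
  simp only [cMom] at h1 ⊢
  generalize (n : ℝ)⁻¹ = p at *
  rw [show (fun z : Fin n → ℕ => p * (((z i : ℝ) - N * p) + (1 - p)) ^ 6 +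
      (1 - p) * (((z i : ℝ) - N * p) - p) ^ 6)
    = fun z => ((z i : ℝ) - N * p) ^ 6 + (15 * (p * (1 - p)) * ((z i : ℝ) - N * p) ^ 4 +
        (20 * (p * (1 - p) * (1 - 2 * p)) * ((z i : ℝ) - N * p) ^ 3 +
        (15 * (p * (1 - p) * ((1 - p) ^ 3 + p ^ 3)) * ((z i : ℝ) - N * p) ^ 2 +
        (6 * (p * (1 - p) * ((1 - p) ^ 4 - p ^ 4)) * ((z i : ℝ) - N * p) ^ 1 +
        p * (1 - p) * ((1 - p) ^ 5 + p ^ 5))))) from by funext z; ring,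
    multE_add, multE_add, multE_add, multE_add, multE_add, multE_const n N hn, multE_cmul,
    multE_cmul, multE_cmul, multE_cmul, h1]
  ring

/-- Bounds `O(μ)`, `O(μ²)`, `O(μ³)` for the even central moments when the mean occupancy `N / n`
is at most `μ` and `μ ≥ 1`. -/
lemma cMom_bounds (n N : ℕ) (hn : 0 < n) (i : Fin n) (μ : ℝ) (hμ : 1 ≤ μ)
    (hN : N * (n : ℝ)⁻¹ ≤ μ) :
    cMom n N i 2 ≤ μ ∧ cMom n N i 4 ≤ 7 * μ ^ 2 ∧ cMom n N i 6 ≤ 141 * μ ^ 3 := by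
  have hp0 : 0 ≤ (n : ℝ)⁻¹ := by positivity
  have hp1 : (n : ℝ)⁻¹ ≤ 1 := inv_le_one_of_one_le₀ (by exact_mod_cast hn)
  have h2' := cMom_two n
  have h3' := cMom_three n
  have h4' := cMom_four_succ n
  have h6' := cMom_six_succ n
  generalize (n : ℝ)⁻¹ = p at *
  -- The cumulant-like coefficients of the recursions all lie in `[-p, p]`.
  have k2 : p * (1 - p) ≤ p := by nlinarith
  have k20 : 0 ≤ p * (1 - p) := mul_nonneg hp0 (by linarith)
  have k3 : |1 - 2 * p| ≤ 1 := by rw [abs_le]; constructor <;> linarith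
  have k4a : (1 - p) ^ 3 + p ^ 3 ≤ 1 := by nlinarith
  have k4b : 0 ≤ (1 - p) ^ 3 + p ^ 3 :=
    add_nonneg (pow_nonneg (by linarith) _) (pow_nonneg hp0 _)
  have k6a : (1 - p) ^ 5 + p ^ 5 ≤ 1 := by
    have e1 : (1 - p) ^ 5 ≤ 1 - p := pow_le_of_le_one (by linarith) (by linarith) (by norm_num)
    have e2 : p ^ 5 ≤ p := pow_le_of_le_one hp0 hp1 (by norm_num)
    linarith
  have hmain : ∀ M : ℕ, M * p ≤ μ →
      cMom n M i 4 ≤ 7 * μ * (M * p) ∧ cMom n M i 6 ≤ 141 * μ ^ 2 * (M * p) := by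
    intro M
    induction M with
    | zero => intro _; simp [cMom_zero_balls]
    | succ M ih =>
      intro hM
      push_cast at hM
      have hMp : (M : ℝ) * p ≤ μ := by nlinarith
      have hMp0 : 0 ≤ (M : ℝ) * p := by positivity
      obtain ⟨ih4, ih6⟩ := ih hMp
      have m2 : cMom n M i 2 ≤ μ := by
        rw [h2' M hn i]; nlinarith
      have m20 : 0 ≤ cMom n M i 2 := by
        rw [h2' M hn i]; positivity
      have m4 : cMom n M i 4 ≤ 7 * μ ^ 2 := by nlinarith
      have m3 : (1 - 2 * p) * cMom n M i 3 ≤ μ := by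
        rw [h3' M hn i]
        have : (1 - 2 * p) ^ 2 ≤ 1 := by nlinarith
        have e : (1 - 2 * p) * (M * (p * (1 - p) * (1 - 2 * p))) =
          (M * p) * ((1 - p) * (1 - 2 * p) ^ 2) := by ring
        rw [e]
        have : (1 - p) * (1 - 2 * p) ^ 2 ≤ 1 := by nlinarith [sq_nonneg (1 - 2 * p)]
        nlinarith
      rw [h4' M hn i, h6' M hn i]
      push_cast
      constructor
      · have e1 : 6 * (p * (1 - p)) * cMom n M i 2 ≤ 6 * p * μ := by
          have := mul_le_mul k2 m2 m20 hp0
          linarith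
        have e2 : p * (1 - p) * ((1 - p) ^ 3 + p ^ 3) ≤ p * μ := by
          have := mul_le_mul k2 (k4a.trans hμ) k4b hp0
          linarith
        nlinarith
      · have hμ2 : μ ≤ μ ^ 2 := by nlinarith
        -- The four terms of the increment share the factor `p * (1 - p)`.
        have e : 15 * cMom n M i 4 + 20 * ((1 - 2 * p) * cMom n M i 3) +
            15 * (((1 - p) ^ 3 + p ^ 3) * cMom n M i 2) + ((1 - p) ^ 5 + p ^ 5) ≤
            141 * μ ^ 2 := by
          have : ((1 - p) ^ 3 + p ^ 3) * cMom n M i 2 ≤ 1 * μ :=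
            mul_le_mul k4a m2 m20 zero_le_one
          nlinarith
        have e5 := mul_le_mul_of_nonneg_left e k20
        have e6 : p * (1 - p) * (141 * μ ^ 2) ≤ p * (141 * μ ^ 2) :=
          mul_le_mul_of_nonneg_right k2 (by positivity)
        nlinarith
  obtain ⟨h4, h6⟩ := hmain N hN
  have hMp0 : 0 ≤ (N : ℝ) * p := by positivity
  refine ⟨?_, ?_, ?_⟩
  · rw [h2' N hn i]; nlinarith
  · nlinarith
  · have : 141 * μ ^ 2 * (N * p) ≤ 141 * μ ^ 2 * μ :=
      mul_le_mul_of_nonneg_left hN (by positivity)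
    nlinarith

/-! ### The shifted cubic statistic: explicit bounds -/

/-- For a nonnegative combination of increasing functions of the individual occupancies the
covariances are nonpositive, so the variance is at most the diagonal part; each diagonal variance
is at most the second moment about an arbitrary point. -/
lemma multE_var_le (n N : ℕ) (hn : 0 < n) (a : Fin n → ℝ) (ha : ∀ i, 0 ≤ a i)
    (h : Fin n → ℕ → ℝ) (hh : ∀ i, Monotone (h i)) (c : Fin n → ℝ) :
    multE n N (fun z => (∑ i, a i * h i (z i) -
        multE n N (fun z => ∑ i, a i * h i (z i))) ^ 2) ≤
      ∑ i, a i ^ 2 * multE n N (fun z => (h i (z i) - c i) ^ 2) := by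
  have hmean : multE n N (fun z => ∑ i, a i * h i (z i)) =
      ∑ i, a i * multE n N (fun z => h i (z i)) := by
    rw [multE_sum]
    simp_rw [multE_cmul]
  rw [hmean]
  set e : Fin n → ℝ := fun i => multE n N (fun z => h i (z i)) with he
  have hfun : (fun z : Fin n → ℕ => (∑ i, a i * h i (z i) - ∑ i, a i * e i) ^ 2) =
      fun z => ∑ i, ∑ j, (a i * a j) * ((h i (z i) - e i) * (h j (z j) - e j)) := by
    funext z
    rw [← Finset.sum_sub_distrib, sq, Finset.sum_mul_sum]
    refine Finset.sum_congr rfl fun i _ => Finset.sum_congr rfl fun j _ => ?_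
    ring
  rw [hfun, multE_sum]
  refine Finset.sum_le_sum fun i _ => ?_
  rw [multE_sum]
  have hoff : ∀ j ∈ univ.erase i,
      multE n N (fun z => (a i * a j) * ((h i (z i) - e i) * (h j (z j) - e j))) ≤ 0 := by
    intro j hj
    rw [multE_cmul]
    refine mul_nonpos_of_nonneg_of_nonpos (mul_nonneg (ha i) (ha j)) ?_
    refine (multE_neg_corr n N (Finset.ne_of_mem_erase hj).symm
      (f := fun t => h i t - e i) (g := fun t => h j t - e j)
      (fun s t hst => sub_le_sub_right (hh i hst) _)
      (fun s t hst => sub_le_sub_right (hh j hst) _)).trans (le_of_eq ?_)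
    have : multE n N (fun z => h i (z i) - e i) = 0 := by
      simp_rw [sub_eq_add_neg]
      rw [multE_add, multE_const n N hn]
      simp [he]
    rw [this, zero_mul]
  have hdiag : multE n N (fun z => (h i (z i) - e i) ^ 2) ≤
      multE n N (fun z => (h i (z i) - c i) ^ 2) := by
    have hf : (fun z : Fin n → ℕ => (h i (z i) - c i) ^ 2) = fun z =>
        (h i (z i) - e i) ^ 2 + ((2 * (e i - c i)) * h i (z i) + (c i ^ 2 - e i ^ 2)) := by
      funext z; ring
    rw [hf, multE_add, multE_add, multE_cmul, multE_const n N hn]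
    have : multE n N (fun z => h i (z i)) = e i := rfl
    rw [this]
    nlinarith [sq_nonneg (e i - c i)]
  rw [← Finset.add_sum_erase _ _ (Finset.mem_univ i)]
  have h1 := Finset.sum_nonpos hoff
  have h2 : multE n N (fun z => (a i * a i) * ((h i (z i) - e i) * (h i (z i) - e i))) =
      a i ^ 2 * multE n N (fun z => (h i (z i) - e i) ^ 2) := by
    rw [← multE_cmul]
    congr 1
    funext z; ring
  rw [h2]
  have h3 := mul_le_mul_of_nonneg_left hdiag (sq_nonneg (a i))
  linarith

/-- The cubic statistic of `N` balls, centred at their mean, shifted by `b` and scaled by `w`.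
With `w = n / m` it is `Σ a_i q_i³` under ST (`N = m`, `b = 0`) and under PL
(`N = m - k`, `b_i = a_i - k / n`). -/
noncomputable def cubT (n N : ℕ) (w : ℝ) (a : Fin n → ℕ) (b : Fin n → ℝ) (y : Fin n → ℕ) : ℝ :=
  ∑ i, (a i : ℝ) * (w * ((y i : ℝ) - N * (n : ℝ)⁻¹ + b i)) ^ 3

lemma cubT_mean (n N : ℕ) (hn : 0 < n) (w : ℝ) (a : Fin n → ℕ) (b : Fin n → ℝ) :
    multE n N (cubT n N w a b) = w ^ 3 *
      ((∑ i, (a i : ℝ)) * (N * ((n : ℝ)⁻¹ * (1 - (n : ℝ)⁻¹) * (1 - 2 * (n : ℝ)⁻¹))) +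
        3 * (N * ((n : ℝ)⁻¹ * (1 - (n : ℝ)⁻¹))) * ∑ i, (a i : ℝ) * b i +
        ∑ i, (a i : ℝ) * b i ^ 3) := by
  have hterm : ∀ i, multE n N
      (fun y => (a i : ℝ) * (w * ((y i : ℝ) - N * (n : ℝ)⁻¹ + b i)) ^ 3) =
      w ^ 3 * ((a i : ℝ) * (N * ((n : ℝ)⁻¹ * (1 - (n : ℝ)⁻¹) * (1 - 2 * (n : ℝ)⁻¹))) +
        3 * (N * ((n : ℝ)⁻¹ * (1 - (n : ℝ)⁻¹))) * ((a i : ℝ) * b i) + (a i : ℝ) * b i ^ 3) := by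
    intro i
    have h1 := cMom_one n N hn i
    have h2 := cMom_two n N hn i
    have h3 := cMom_three n N hn i
    simp only [cMom] at h1 h2 h3
    rw [show (fun y : Fin n → ℕ => (a i : ℝ) * (w * ((y i : ℝ) - N * (n : ℝ)⁻¹ + b i)) ^ 3) =
      fun y => ((a i : ℝ) * w ^ 3) * (((y i : ℝ) - N * (n : ℝ)⁻¹) ^ 3 +
        ((3 * b i) * ((y i : ℝ) - N * (n : ℝ)⁻¹) ^ 2 +
        ((3 * b i ^ 2) * ((y i : ℝ) - N * (n : ℝ)⁻¹) ^ 1 + b i ^ 3))) from by funext y; ring,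
      multE_cmul, multE_add, multE_add, multE_add, multE_cmul, multE_cmul,
      multE_const n N hn, h1, h2, h3]
    ring
  unfold cubT
  rw [multE_sum, Finset.sum_congr rfl fun i _ => hterm i, ← Finset.mul_sum,
    Finset.sum_add_distrib, Finset.sum_add_distrib, ← Finset.sum_mul, ← Finset.mul_sum]

lemma cubT_var_le (n N : ℕ) (hn : 0 < n) (w μ C : ℝ) (a : Fin n → ℕ) (b : Fin n → ℝ)
    (hw : 0 ≤ w) (hμ : 1 ≤ μ) (hC : 0 ≤ C) (hwμ : w * μ = 1) (hN : N * (n : ℝ)⁻¹ ≤ μ)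
    (hb : ∀ i, b i ^ 2 ≤ C * μ) (hQ : ∑ i, (a i : ℝ) ^ 2 ≤ C * μ + C ^ 2 * μ ^ 2) :
    multE n N (fun y => (cubT n N w a b y - multE n N (cubT n N w a b)) ^ 2) ≤
      (C + C ^ 2) * (3 * (141 + 63 * C + 9 * C ^ 2)) * w := by
  have hmono : ∀ i, Monotone (fun t : ℕ => (w * ((t : ℝ) - N * (n : ℝ)⁻¹ + b i)) ^ 3) := by
    intro i s t hst
    have h3 : Monotone (fun x : ℝ => x ^ 3) := (Odd.strictMono_pow (by decide)).monotone
    refine h3 (mul_le_mul_of_nonneg_left ?_ hw)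
    have : (s : ℝ) ≤ t := by exact_mod_cast hst
    linarith
  refine (multE_var_le n N hn (fun i => (a i : ℝ)) (fun i => Nat.cast_nonneg _)
    (fun i t => (w * ((t : ℝ) - N * (n : ℝ)⁻¹ + b i)) ^ 3) hmono
    (fun i => (w * b i) ^ 3)).trans ?_
  set K : ℝ := 3 * (141 + 63 * C + 9 * C ^ 2) with hK
  have hK0 : 0 ≤ K := by positivity
  have hμ0 : 0 ≤ μ := by linarith
  have hbound : ∀ i, multE n N (fun z => ((w * ((z i : ℝ) - N * (n : ℝ)⁻¹ + b i)) ^ 3 -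
      (w * b i) ^ 3) ^ 2) ≤ K * w ^ 3 := by
    intro i
    obtain ⟨m2, m4, m6⟩ := cMom_bounds n N hn i μ hμ hN
    have hle : multE n N (fun z => ((w * ((z i : ℝ) - N * (n : ℝ)⁻¹ + b i)) ^ 3 -
        (w * b i) ^ 3) ^ 2) ≤ multE n N (fun z => (3 * w ^ 6) *
          (((z i : ℝ) - N * (n : ℝ)⁻¹) ^ 6 + ((9 * b i ^ 2) * ((z i : ℝ) - N * (n : ℝ)⁻¹) ^ 4 +
            (9 * b i ^ 4) * ((z i : ℝ) - N * (n : ℝ)⁻¹) ^ 2))) := by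
      refine multE_mono n N fun z => ?_
      generalize (z i : ℝ) - N * (n : ℝ)⁻¹ = x
      generalize b i = β
      have e : ((w * (x + β)) ^ 3 - (w * β) ^ 3) ^ 2 =
        w ^ 6 * (x ^ 3 + 3 * β * x ^ 2 + 3 * β ^ 2 * x) ^ 2 := by ring
      rw [e, show ∀ t, 3 * w ^ 6 * t = w ^ 6 * (3 * t) from fun t => by ring]
      refine mul_le_mul_of_nonneg_left ?_ (by positivity)
      nlinarith [sq_nonneg (x ^ 3 - 3 * β * x ^ 2), sq_nonneg (x ^ 3 - 3 * β ^ 2 * x),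
        sq_nonneg (3 * β * x ^ 2 - 3 * β ^ 2 * x)]
    refine hle.trans ?_
    rw [multE_cmul, multE_add, multE_add, multE_cmul, multE_cmul]
    change 3 * w ^ 6 * (cMom n N i 6 + (9 * b i ^ 2 * cMom n N i 4 +
      9 * b i ^ 4 * cMom n N i 2)) ≤ _
    have hb4 : b i ^ 4 ≤ C ^ 2 * μ ^ 2 := by
      have := pow_le_pow_left₀ (sq_nonneg (b i)) (hb i) 2
      nlinarith
    have e4 : b i ^ 2 * cMom n N i 4 ≤ (C * μ) * (7 * μ ^ 2) :=
      (mul_le_mul_of_nonneg_left m4 (sq_nonneg _)).trans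
        (mul_le_mul_of_nonneg_right (hb i) (by positivity))
    have e2 : b i ^ 4 * cMom n N i 2 ≤ (C ^ 2 * μ ^ 2) * μ :=
      (mul_le_mul_of_nonneg_left m2 (by positivity)).trans
        (mul_le_mul_of_nonneg_right hb4 hμ0)
    have esum : cMom n N i 6 + (9 * b i ^ 2 * cMom n N i 4 + 9 * b i ^ 4 * cMom n N i 2) ≤
        (141 + 63 * C + 9 * C ^ 2) * μ ^ 3 := by nlinarith
    calc 3 * w ^ 6 * (cMom n N i 6 + (9 * b i ^ 2 * cMom n N i 4 + 9 * b i ^ 4 * cMom n N i 2))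
        ≤ 3 * w ^ 6 * ((141 + 63 * C + 9 * C ^ 2) * μ ^ 3) :=
          mul_le_mul_of_nonneg_left esum (by positivity)
      _ = K * w ^ 3 * (w * μ) ^ 3 := by rw [hK]; ring
      _ = K * w ^ 3 := by rw [hwμ]; ring
  calc ∑ i, (a i : ℝ) ^ 2 * multE n N (fun z => ((w * ((z i : ℝ) - N * (n : ℝ)⁻¹ + b i)) ^ 3 -
        (w * b i) ^ 3) ^ 2)
      ≤ ∑ i, (a i : ℝ) ^ 2 * (K * w ^ 3) :=
        Finset.sum_le_sum fun i _ => mul_le_mul_of_nonneg_left (hbound i) (sq_nonneg _)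
    _ = (∑ i, (a i : ℝ) ^ 2) * (K * w ^ 3) := by rw [Finset.sum_mul]
    _ ≤ (C * μ + C ^ 2 * μ ^ 2) * (K * w ^ 3) :=
        mul_le_mul_of_nonneg_right hQ (by positivity)
    _ ≤ (C * μ ^ 2 + C ^ 2 * μ ^ 2) * (K * w ^ 3) := by
        refine mul_le_mul_of_nonneg_right ?_ (by positivity)
        nlinarith [mul_nonneg hC (mul_nonneg hμ0 (sub_nonneg.2 hμ))]
    _ = (C + C ^ 2) * K * w * (w * μ) ^ 2 := by ring
    _ = (C + C ^ 2) * K * w := by rw [hwμ]; ring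

/-- The mean differs from `(Σ a_i) w²` by `O(w + 1 / n)`, where `w = n / m` and `μ = m / n`. -/
lemma cubT_mean_le (n N m : ℕ) (hn : 0 < n) (w μ C : ℝ) (a : Fin n → ℕ) (b : Fin n → ℝ)
    (hw : 0 ≤ w) (hC : 0 ≤ C) (hμ : μ = m * (n : ℝ)⁻¹) (hwμ : w * μ = 1)
    (hNm : N ≤ m) (hmN : m ≤ N + ∑ i, a i)
    (hk1 : (∑ i, (a i : ℝ)) ^ 2 * (n : ℝ)⁻¹ ≤ C ^ 2 * μ ^ 2)
    (hk2 : (∑ i, (a i : ℝ)) * (n : ℝ)⁻¹ ≤ C * μ)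
    (hab : |∑ i, (a i : ℝ) * b i| ≤ C * μ)
    (hab3 : |∑ i, (a i : ℝ) * b i ^ 3| ≤ 3 / 2 * C ^ 2 * μ ^ 2 + C ^ 3 / 2 * μ ^ 3 * (n : ℝ)⁻¹) :
    |multE n N (cubT n N w a b) - (∑ i, (a i : ℝ)) * w ^ 2| ≤
      (6 * C + 3 * C ^ 2 + C ^ 3) * (w + (n : ℝ)⁻¹) := by
  rw [cubT_mean n N hn]
  have hp0 : 0 ≤ (n : ℝ)⁻¹ := by positivity
  have hp1 : (n : ℝ)⁻¹ ≤ 1 := inv_le_one_of_one_le₀ (by exact_mod_cast hn)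
  have hNm' : (N : ℝ) ≤ m := by exact_mod_cast hNm
  have hmN' : (m : ℝ) ≤ N + ∑ i, (a i : ℝ) := by exact_mod_cast hmN
  have hN0 : (0 : ℝ) ≤ N := Nat.cast_nonneg _
  have hk0 : 0 ≤ ∑ i, (a i : ℝ) := Finset.sum_nonneg fun i _ => Nat.cast_nonneg _
  generalize (n : ℝ)⁻¹ = p at *
  generalize ∑ i, (a i : ℝ) = k at *
  generalize ∑ i, (a i : ℝ) * b i = s1 at *
  generalize ∑ i, (a i : ℝ) * b i ^ 3 = s3 at *
  generalize (N : ℝ) = M at *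
  generalize (m : ℝ) = m' at *
  have hm0 : 0 ≤ m' := hN0.trans hNm'
  have hμ0 : 0 ≤ μ := by rw [hμ]; positivity
  have hmain : |w ^ 3 * (k * (M * (p * (1 - p) * (1 - 2 * p)))) - k * w ^ 2| ≤
      (C ^ 2 + 3 * C) * w := by
    have e1 : w ^ 3 * (k * (M * (p * (1 - p) * (1 - 2 * p)))) - k * w ^ 2 =
        w ^ 3 * (k * p) * (M * ((1 - p) * (1 - 2 * p)) - m') := by
      have : k * w ^ 2 = w ^ 3 * (k * p) * m' := by
        calc k * w ^ 2 = k * w ^ 2 * (w * μ) := by rw [hwμ, mul_one]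
          _ = _ := by rw [hμ]; ring
      rw [this]; ring
    have e2 : |M * ((1 - p) * (1 - 2 * p)) - m'| ≤ k + 3 * p * m' := by
      have q1 : (1 - p) * (1 - 2 * p) ≤ 1 := by nlinarith
      have q2 : 1 - 3 * p ≤ (1 - p) * (1 - 2 * p) := by nlinarith
      have q3 := mul_le_mul_of_nonneg_left q1 hN0
      have q4 := mul_le_mul_of_nonneg_left q2 hN0
      have q5 := mul_le_mul_of_nonneg_left hNm' hp0
      have q6 := mul_nonneg hp0 hm0
      rw [abs_le]
      constructor <;> nlinarith
    rw [e1, abs_mul, abs_of_nonneg (by positivity : 0 ≤ w ^ 3 * (k * p))]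
    calc w ^ 3 * (k * p) * |M * ((1 - p) * (1 - 2 * p)) - m'|
        ≤ w ^ 3 * (k * p) * (k + 3 * p * m') :=
          mul_le_mul_of_nonneg_left e2 (by positivity)
      _ = w ^ 3 * (k ^ 2 * p) + 3 * w ^ 3 * μ * (k * p) := by rw [hμ]; ring
      _ ≤ w ^ 3 * (C ^ 2 * μ ^ 2) + 3 * w ^ 3 * μ * (C * μ) := by gcongr
      _ = (C ^ 2 + 3 * C) * w * (w * μ) ^ 2 := by ring
      _ = (C ^ 2 + 3 * C) * w := by rw [hwμ]; ring
  have h1 : |w ^ 3 * (3 * (M * (p * (1 - p))) * s1)| ≤ 3 * C * w := by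
    have r1 : M * (p * (1 - p)) ≤ μ := by
      rw [hμ]
      have : p * (1 - p) ≤ p := by nlinarith
      exact mul_le_mul hNm' this (mul_nonneg hp0 (by linarith)) hm0
    have r0 : 0 ≤ M * (p * (1 - p)) := mul_nonneg hN0 (mul_nonneg hp0 (by linarith))
    rw [abs_mul, abs_mul, abs_of_nonneg (by positivity : 0 ≤ w ^ 3),
      abs_of_nonneg (by positivity : 0 ≤ 3 * (M * (p * (1 - p))))]
    calc w ^ 3 * (3 * (M * (p * (1 - p))) * |s1|) ≤ w ^ 3 * (3 * μ * (C * μ)) := by gcongr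
      _ = 3 * C * w * (w * μ) ^ 2 := by ring
      _ = 3 * C * w := by rw [hwμ]; ring
  have h3 : |w ^ 3 * s3| ≤ 3 / 2 * C ^ 2 * w + C ^ 3 / 2 * p := by
    rw [abs_mul, abs_of_nonneg (by positivity : 0 ≤ w ^ 3)]
    calc w ^ 3 * |s3| ≤ w ^ 3 * (3 / 2 * C ^ 2 * μ ^ 2 + C ^ 3 / 2 * μ ^ 3 * p) := by gcongr
      _ = 3 / 2 * C ^ 2 * w * (w * μ) ^ 2 + C ^ 3 / 2 * p * (w * μ) ^ 3 := by ring
      _ = _ := by rw [hwμ]; ring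
  have hsplit : w ^ 3 * (k * (M * (p * (1 - p) * (1 - 2 * p))) + 3 * (M * (p * (1 - p))) * s1 + s3)
      - k * w ^ 2 = (w ^ 3 * (k * (M * (p * (1 - p) * (1 - 2 * p)))) - k * w ^ 2) +
        w ^ 3 * (3 * (M * (p * (1 - p))) * s1) + w ^ 3 * s3 := by ring
  rw [hsplit]
  refine (abs_add_three _ _ _).trans ?_
  have t1 : 0 ≤ C * p := by positivity
  have t2 : 0 ≤ C ^ 2 * p := by positivity
  have t3 : 0 ≤ C ^ 3 * p := by positivity
  have t4 : 0 ≤ C ^ 3 * w := by positivity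
  have t5 : 0 ≤ C ^ 2 * w := by positivity
  nlinarith

/-! ### Expectation and variance of the cubic statistic under both distributions -/

lemma stat_st (n m : ℕ) (a : Fin n → ℕ) :
    (fun z => ∑ i, (a i : ℝ) * qStat n m z i ^ 3) = cubT n m ((n : ℝ) / m) a (fun _ => 0) := by
  funext z
  simp [cubT, qStat, div_eq_mul_inv]

lemma stat_pl (n m : ℕ) (a : Fin n → ℕ) (ha : ∑ i, a i ≤ m) :
    (fun y => ∑ i, (a i : ℝ) * qStat n m (y + a) i ^ 3) =
      cubT n (m - ∑ i, a i) ((n : ℝ) / m) a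
        (fun i => (a i : ℝ) - (∑ i, (a i : ℝ)) * (n : ℝ)⁻¹) := by
  funext y
  unfold cubT qStat
  refine Finset.sum_congr rfl fun i _ => ?_
  rw [Nat.cast_sub ha]
  push_cast [Pi.add_apply]
  congr 3
  ring

lemma expec_st (n m : ℕ) (T : (Fin n → ℕ) → ℝ) : expec (stProb n m) T = multE n m T :=
  (hasSum_stProb n m T).tsum_eq

lemma varOf_st (n m : ℕ) (T : (Fin n → ℕ) → ℝ) :
    varOf (stProb n m) T = multE n m (fun z => (T z - multE n m T) ^ 2) := by
  rw [varOf, expec_st]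
  exact (hasSum_stProb n m (fun z => (T z - multE n m T) ^ 2)).tsum_eq

lemma expec_pl (n m : ℕ) (a : Fin n → ℕ) (ha : ∑ i, a i ≤ m) (T : (Fin n → ℕ) → ℝ) :
    expec (plProb n m a) T = multE n (m - ∑ i, a i) (fun y => T (y + a)) :=
  (hasSum_plProb n m a ha T).tsum_eq

lemma varOf_pl (n m : ℕ) (a : Fin n → ℕ) (ha : ∑ i, a i ≤ m) (T : (Fin n → ℕ) → ℝ) :
    varOf (plProb n m a) T = multE n (m - ∑ i, a i)
      (fun y => (T (y + a) - multE n (m - ∑ i, a i) (fun y => T (y + a))) ^ 2) := by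
  rw [varOf, expec_pl n m a ha]
  exact (hasSum_plProb n m a ha
    (fun z => (T z - multE n (m - ∑ i, a i) (fun y => T (y + a))) ^ 2)).tsum_eq

lemma multE_sq_nonneg (n N : ℕ) (hn : 0 < n) (f : (Fin n → ℕ) → ℝ) :
    0 ≤ multE n N (fun z => f z ^ 2) := by
  have := multE_mono n N (f := fun _ => 0) (g := fun z => f z ^ 2) fun z => sq_nonneg _
  rwa [multE_const n N hn] at this

/-- AM-GM in the form `|q x³| ≤ (q² x² + x⁴) / 2`. -/
lemma abs_cubic_le (x q : ℝ) : |(x + q) * x ^ 3| ≤ (3 / 2 * x ^ 2 + q ^ 2 / 2) * x ^ 2 := by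
  have h1 : 0 ≤ x ^ 2 * (x + q) ^ 2 := by positivity
  have h2 : 0 ≤ x ^ 2 * (x - q) ^ 2 := by positivity
  have h3 : 0 ≤ x ^ 4 := by positivity
  rw [abs_le]
  constructor <;> linarith

/-- Non-asymptotic form of the theorem: all four deviations are `O(n / m + 1 / n)`, with an
implied constant depending only on the `C` bounding `k √n / m` and `n² V(A) / m`. -/
lemma finite_bounds (n m k : ℕ) (hn : 0 < n) (a : Fin n → ℕ) (hka : ∑ i, a i = k) (hkm : k ≤ m)
    (C : ℝ) (hC : 0 ≤ C) (hμ : 1 ≤ (m : ℝ) / n) (hkC : (k : ℝ) * Real.sqrt n ≤ C * m)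
    (hVC : (n : ℝ) ^ 2 * plantV n a ≤ C * m) :
    ‖expec (stProb n m) (fun z => ∑ i, (a i : ℝ) * qStat n m z i ^ 3) -
        (k : ℝ) * (n : ℝ) ^ 2 / (m : ℝ) ^ 2‖ ≤
      (6 * C + 3 * C ^ 2 + C ^ 3) * ((n : ℝ) / m + (n : ℝ)⁻¹) ∧
    ‖varOf (stProb n m) (fun z => ∑ i, (a i : ℝ) * qStat n m z i ^ 3)‖ ≤
      (C + C ^ 2) * (3 * (141 + 63 * C + 9 * C ^ 2)) * ((n : ℝ) / m) ∧
    ‖expec (plProb n m a) (fun z => ∑ i, (a i : ℝ) * qStat n m z i ^ 3) -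
        (k : ℝ) * (n : ℝ) ^ 2 / (m : ℝ) ^ 2‖ ≤
      (6 * C + 3 * C ^ 2 + C ^ 3) * ((n : ℝ) / m + (n : ℝ)⁻¹) ∧
    ‖varOf (plProb n m a) (fun z => ∑ i, (a i : ℝ) * qStat n m z i ^ 3)‖ ≤
      (C + C ^ 2) * (3 * (141 + 63 * C + 9 * C ^ 2)) * ((n : ℝ) / m) := by
  have hn' : (0 : ℝ) < n := by exact_mod_cast hn
  have hn1 : (1 : ℝ) ≤ n := by exact_mod_cast hn
  have hm' : (0 : ℝ) < m := by
    by_contra h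
    have h0 : (m : ℝ) = 0 := le_antisymm (not_lt.1 h) (Nat.cast_nonneg _)
    rw [h0, zero_div] at hμ
    linarith
  have hle : ∑ i, a i ≤ m := hka.trans_le hkm
  have hsum : ∑ i, (a i : ℝ) = k := by exact_mod_cast hka
  set w : ℝ := (n : ℝ) / m with hw
  set μ : ℝ := (m : ℝ) / n with hμdef
  set p : ℝ := (n : ℝ)⁻¹ with hp
  have hw0 : 0 ≤ w := by positivity
  have hp0 : 0 ≤ p := by positivity
  have hμ0 : 0 ≤ μ := by linarith
  have hwμ : w * μ = 1 := by rw [hw, hμdef]; field_simp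
  have hμp : μ = m * p := by rw [hμdef, hp, div_eq_mul_inv]
  have hnp : (n : ℝ) * p = 1 := mul_inv_cancel₀ hn'.ne'
  have hkw : (k : ℝ) * (n : ℝ) ^ 2 / (m : ℝ) ^ 2 = k * w ^ 2 := by rw [hw]; ring
  have hss : Real.sqrt n ^ 2 = n := Real.sq_sqrt hn'.le
  have hk0 : (0 : ℝ) ≤ k := Nat.cast_nonneg _
  have hk1 : (k : ℝ) ^ 2 * p ≤ C ^ 2 * μ ^ 2 := by
    have h1 : (k * Real.sqrt n) ^ 2 ≤ (C * m) ^ 2 := pow_le_pow_left₀ (by positivity) hkC 2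
    rw [mul_pow, hss] at h1
    calc (k : ℝ) ^ 2 * p = k ^ 2 * p * (n * p) := by rw [hnp, mul_one]
      _ = k ^ 2 * n * p ^ 2 := by ring
      _ ≤ (C * m) ^ 2 * p ^ 2 := by gcongr
      _ = C ^ 2 * μ ^ 2 := by rw [hμp]; ring
  have hk2 : (k : ℝ) * p ≤ C * μ := by
    have h1 : 1 ≤ Real.sqrt n := Real.one_le_sqrt.2 hn1
    calc (k : ℝ) * p ≤ k * Real.sqrt n * p := by
          refine mul_le_mul_of_nonneg_right ?_ hp0
          nlinarith
      _ ≤ C * m * p := by gcongr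
      _ = C * μ := by rw [hμp]; ring
  -- The squared deviations `b i ^ 2` of the planting from its mean add up to `n V(A)`.
  set b : Fin n → ℝ := fun i => (a i : ℝ) - k * p with hb
  have hS1 : ∑ i, b i ^ 2 = ∑ i, (a i : ℝ) ^ 2 - k ^ 2 * p := by
    have : ∀ i, b i ^ 2 = (a i : ℝ) ^ 2 + (-(2 * k * p) * a i + (k * p) ^ 2) := by
      intro i; simp only [hb]; ring
    simp_rw [this]
    rw [Finset.sum_add_distrib, Finset.sum_add_distrib, ← Finset.mul_sum, hsum]
    simp only [Finset.sum_const, Finset.card_univ, Fintype.card_fin, nsmul_eq_mul]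
    linear_combination (k : ℝ) ^ 2 * p * hnp
  have hS2 : ∑ i, (a i : ℝ) * b i = ∑ i, b i ^ 2 := by
    rw [hS1]
    have : ∀ i, (a i : ℝ) * b i = (a i : ℝ) ^ 2 + -(k * p) * a i := by
      intro i; simp only [hb]; ring
    simp_rw [this]
    rw [Finset.sum_add_distrib, ← Finset.mul_sum, hsum]
    ring
  have hS : ∑ i, b i ^ 2 ≤ C * μ := by
    have h1 : ∑ i, b i ^ 2 = (n : ℝ) ^ 2 * plantV n a * p := by
      rw [hS1, plantV, hsum, div_eq_mul_inv, div_eq_mul_inv, ← hp]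
      linear_combination (-(∑ i, (a i : ℝ) ^ 2) * (n * p + 1) + k ^ 2 * p * (n * p + 1)) * hnp
    rw [h1, hμp, ← mul_assoc]
    gcongr
  have hS0 : 0 ≤ ∑ i, b i ^ 2 := Finset.sum_nonneg fun i _ => sq_nonneg _
  have hbi : ∀ i, b i ^ 2 ≤ C * μ := fun i =>
    (Finset.single_le_sum (f := fun i => b i ^ 2) (fun j _ => sq_nonneg _)
      (Finset.mem_univ i)).trans hS
  have hQ : ∑ i, (a i : ℝ) ^ 2 ≤ C * μ + C ^ 2 * μ ^ 2 := by linarith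
  have hab3 : |∑ i, (a i : ℝ) * b i ^ 3| ≤
      3 / 2 * C ^ 2 * μ ^ 2 + C ^ 3 / 2 * μ ^ 3 * p := by
    have hterm : ∀ i, |(a i : ℝ) * b i ^ 3| ≤
        (3 / 2 * (C * μ) + C ^ 2 * μ ^ 2 * p / 2) * b i ^ 2 := by
      intro i
      have hai : (a i : ℝ) = b i + k * p := by simp [hb]
      rw [hai]
      have h1 : (k * p) ^ 2 ≤ C ^ 2 * μ ^ 2 * p := by
        calc (k * p) ^ 2 = k ^ 2 * p * p := by ring
          _ ≤ _ := by gcongr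
      have h2 := hbi i
      have h3 : 0 ≤ b i ^ 2 := sq_nonneg _
      have h4 := abs_cubic_le (b i) (k * p)
      refine h4.trans (mul_le_mul_of_nonneg_right ?_ h3)
      linarith
    calc |∑ i, (a i : ℝ) * b i ^ 3| ≤ ∑ i, |(a i : ℝ) * b i ^ 3| :=
          Finset.abs_sum_le_sum_abs _ _
      _ ≤ ∑ i, (3 / 2 * (C * μ) + C ^ 2 * μ ^ 2 * p / 2) * b i ^ 2 :=
          Finset.sum_le_sum fun i _ => hterm i
      _ = (3 / 2 * (C * μ) + C ^ 2 * μ ^ 2 * p / 2) * ∑ i, b i ^ 2 := by rw [Finset.mul_sum]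
      _ ≤ (3 / 2 * (C * μ) + C ^ 2 * μ ^ 2 * p / 2) * (C * μ) := by gcongr
      _ = _ := by ring
  have hNle : ((m - ∑ i, a i : ℕ) : ℝ) * p ≤ μ := by
    rw [hμp]
    refine mul_le_mul_of_nonneg_right ?_ hp0
    exact_mod_cast Nat.sub_le _ _
  have hDpos : 0 ≤ 3 / 2 * C ^ 2 * μ ^ 2 + C ^ 3 / 2 * μ ^ 3 * p := by positivity
  have hbb : (fun i => (a i : ℝ) - (∑ i, (a i : ℝ)) * (n : ℝ)⁻¹) = b := by rw [hsum]
  rw [hkw, ← hsum]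
  refine ⟨?_, ?_, ?_, ?_⟩
  · rw [stat_st, expec_st]
    exact cubT_mean_le n m m hn w μ C a _ hw0 hC hμp hwμ le_rfl (Nat.le_add_right _ _)
      (by rwa [hsum]) (by rwa [hsum]) (by simpa using by positivity) (by simpa using hDpos)
  · rw [stat_st, varOf_st, Real.norm_of_nonneg (multE_sq_nonneg n _ hn _)]
    exact cubT_var_le n m hn w μ C a _ hw0 hμ hC hwμ hμp.ge
      (fun i => by simpa using by positivity) hQ
  · rw [expec_pl n m a hle, stat_pl n m a hle, hbb]
    exact cubT_mean_le n _ m hn w μ C a b hw0 hC hμp hwμ (Nat.sub_le _ _) (by omega)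
      (by rwa [hsum]) (by rwa [hsum]) (by rw [hS2, abs_of_nonneg hS0]; exact hS) hab3
  · have hT := stat_pl n m a hle
    rw [varOf_pl n m a hle, hT, Real.norm_of_nonneg (multE_sq_nonneg n _ hn _), hbb]
    rw [hbb] at hT
    have hT' : ∀ y, ∑ i, (a i : ℝ) * qStat n m (y + a) i ^ 3 = _ := congrFun hT
    simp only [hT']
    exact cubT_var_le n _ hn w μ C a b hw0 hμ hC hwμ hNle hbi hQ

/-! ### The three regimes -/

/-- In every regime `m` dominates both `k √n` and `n² V(A)`. -/
lemma regime_bounds (A : (n : ℕ) → Fin n → ℕ) (m k : ℕ → ℕ)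
    (hk : Tendsto (fun n : ℕ => (k n : ℝ) / Real.sqrt n) atTop atTop)
    (hreg : SomeRegime A m k) :
    ∃ C : ℝ, 0 ≤ C ∧ (∀ᶠ n : ℕ in atTop, (k n : ℝ) * Real.sqrt n ≤ C * m n) ∧
      ∀ᶠ n : ℕ in atTop, (n : ℝ) ^ 2 * plantV n (A n) ≤ C * m n := by
  have hkpos : ∀ᶠ n : ℕ in atTop, (0 : ℝ) < n ∧ (0 : ℝ) < k n := by
    filter_upwards [hk.eventually_gt_atTop 0, eventually_gt_atTop 0] with n h hn
    refine ⟨by exact_mod_cast hn, ?_⟩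
    by_contra h0
    have : (k n : ℝ) = 0 := le_antisymm (not_lt.1 h0) (Nat.cast_nonneg _)
    simp [this] at h
  have hpow : ∀ n : ℕ, (0 : ℝ) < n → (n : ℝ) ^ 2 = (n : ℝ) ^ ((3 : ℝ) / 2) * Real.sqrt n := by
    intro n hn
    rw [Real.sqrt_eq_rpow, ← Real.rpow_add hn]
    norm_num
  -- The flat and intermediate regimes differ only in the value of the finite limit `L`.
  have hfin : ∀ L c : ℝ, 0 ≤ L → 0 < c →
      Tendsto (fun n : ℕ => (n : ℝ) ^ ((3 : ℝ)/2) * plantV n (A n) / (k n : ℝ)) atTop (𝓝 L) →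
      Tendsto (fun n : ℕ => (m n : ℝ) / ((k n : ℝ) * Real.sqrt n)) atTop (𝓝 c) →
      ∃ C : ℝ, 0 ≤ C ∧ (∀ᶠ n : ℕ in atTop, (k n : ℝ) * Real.sqrt n ≤ C * m n) ∧
        ∀ᶠ n : ℕ in atTop, (n : ℝ) ^ 2 * plantV n (A n) ≤ C * m n := by
    intro L c hL hc h1 h2
    have hm : ∀ᶠ n : ℕ in atTop, (k n : ℝ) * Real.sqrt n ≤ 2 / c * m n := by
      filter_upwards [hkpos, h2.eventually_const_lt (half_lt_self hc)] with n hp h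
      have hs := Real.sqrt_pos.2 hp.1
      rw [lt_div_iff₀ (mul_pos hp.2 hs)] at h
      rw [div_mul_eq_mul_div, le_div_iff₀ hc]
      linarith
    refine ⟨(L + 1) * (2 / c), by positivity, ?_, ?_⟩
    · filter_upwards [hm] with n h
      have : 0 ≤ L * (2 / c * (m n : ℝ)) := by positivity
      linarith
    · filter_upwards [hm, hkpos, h1.eventually_lt_const (lt_add_one L)] with n h hp h3
      have hs := Real.sqrt_pos.2 hp.1
      rw [div_lt_iff₀ hp.2] at h3
      rw [hpow n hp.1]
      calc (n : ℝ) ^ ((3 : ℝ) / 2) * Real.sqrt n * plantV n (A n)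
          = ((n : ℝ) ^ ((3 : ℝ) / 2) * plantV n (A n)) * Real.sqrt n := by ring
        _ ≤ ((L + 1) * k n) * Real.sqrt n := by gcongr
        _ = (L + 1) * (k n * Real.sqrt n) := by ring
        _ ≤ (L + 1) * (2 / c * m n) := by gcongr
        _ = _ := by ring
  rcases hreg with ⟨c, hc, h1, h2⟩ | ⟨L, c, hL, hc, h1, h2⟩ | ⟨c, hc, h1, h2⟩
  · exact hfin 0 c le_rfl hc h1 h2
  · exact hfin L c hL.le hc h1 h2
  · have hboth : ∀ᶠ n : ℕ in atTop, (k n : ℝ) * Real.sqrt n ≤ (n : ℝ) ^ 2 * plantV n (A n) ∧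
        (n : ℝ) ^ 2 * plantV n (A n) ≤ 2 / c * m n := by
      filter_upwards [hkpos, h1.eventually_ge_atTop 1,
        h2.eventually_const_lt (half_lt_self hc)] with n hp h3 h4
      have hs := Real.sqrt_pos.2 hp.1
      rw [le_div_iff₀ hp.2, one_mul] at h3
      have h5 : (k n : ℝ) * Real.sqrt n ≤ (n : ℝ) ^ 2 * plantV n (A n) := by
        rw [hpow n hp.1]
        calc (k n : ℝ) * Real.sqrt n
            ≤ ((n : ℝ) ^ ((3 : ℝ) / 2) * plantV n (A n)) * Real.sqrt n := by gcongr
          _ = _ := by ring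
      have h6 : 0 < plantV n (A n) * (n : ℝ) ^ 2 := by
        have := mul_pos hp.2 hs
        linarith
      rw [lt_div_iff₀ h6] at h4
      refine ⟨h5, ?_⟩
      rw [div_mul_eq_mul_div, le_div_iff₀ hc]
      linarith
    refine ⟨2 / c, by positivity, ?_, ?_⟩
    · filter_upwards [hboth] with n h using h.1.trans h.2
    · filter_upwards [hboth] with n h using h.2

/-- in all three regimes, under both ST and PL,
`E[Σ a_i q_i³] = kn²/m² + o(1)` and `Var[Σ a_i q_i³] = o(1)`. -/
theorem cubic_stat_moments (A : (n : ℕ) → Fin n → ℕ) (m k : ℕ → ℕ)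
    (hka : ∀ n, ∑ i, A n i = k n) (hkm : ∀ n, k n ≤ m n)
    (hk : Tendsto (fun n : ℕ => (k n : ℝ) / Real.sqrt n) atTop atTop)
    (hreg : SomeRegime A m k) :
    Tendsto (fun n : ℕ => expec (stProb n (m n))
        (fun z => ∑ i, (A n i : ℝ) * qStat n (m n) z i ^ 3) -
        (k n : ℝ) * (n : ℝ) ^ 2 / (m n : ℝ) ^ 2) atTop (𝓝 0) ∧
    Tendsto (fun n : ℕ => varOf (stProb n (m n))
        (fun z => ∑ i, (A n i : ℝ) * qStat n (m n) z i ^ 3)) atTop (𝓝 0) ∧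
    Tendsto (fun n : ℕ => expec (plProb n (m n) (A n))
        (fun z => ∑ i, (A n i : ℝ) * qStat n (m n) z i ^ 3) -
        (k n : ℝ) * (n : ℝ) ^ 2 / (m n : ℝ) ^ 2) atTop (𝓝 0) ∧
    Tendsto (fun n : ℕ => varOf (plProb n (m n) (A n))
        (fun z => ∑ i, (A n i : ℝ) * qStat n (m n) z i ^ 3)) atTop (𝓝 0) := by
  obtain ⟨C, hC, hkC, hVC⟩ := regime_bounds A m k hk hreg
  have hμ : Tendsto (fun n : ℕ => (m n : ℝ) / n) atTop atTop := by
    refine tendsto_atTop_mono' atTop ?_ (hk.atTop_div_const (r := C + 1) (by linarith))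
    filter_upwards [hkC, eventually_gt_atTop 0] with n h hn
    have hn' : (0 : ℝ) < n := by exact_mod_cast hn
    have hs : 0 < Real.sqrt n := Real.sqrt_pos.2 hn'
    have hss : Real.sqrt n * Real.sqrt n = n := Real.mul_self_sqrt hn'.le
    have hm0 : (0 : ℝ) ≤ m n := Nat.cast_nonneg _
    rw [div_div, div_le_div_iff₀ (by positivity) hn']
    calc (k n : ℝ) * n = (k n * Real.sqrt n) * Real.sqrt n := by rw [mul_assoc, hss]
      _ ≤ (C * m n) * Real.sqrt n := by gcongr
      _ ≤ m n * (Real.sqrt n * (C + 1)) := by nlinarith [mul_nonneg hm0 hs.le]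
  have hw : Tendsto (fun n : ℕ => (n : ℝ) / m n) atTop (𝓝 0) := by
    refine hμ.inv_tendsto_atTop.congr fun n => ?_
    simp [inv_div]
  have hp : Tendsto (fun n : ℕ => (n : ℝ)⁻¹) atTop (𝓝 0) := tendsto_inv_atTop_nhds_zero_nat
  have hall := ((hkC.and hVC).and
    ((eventually_gt_atTop (0 : ℕ)).and (hμ.eventually_ge_atTop 1))).mono fun n h =>
      finite_bounds n (m n) (k n) h.2.1 (A n) (hka n) (hkm n) C hC h.2.2 h.1.1 h.1.2
  have hmean : Tendsto (fun n : ℕ => (6 * C + 3 * C ^ 2 + C ^ 3) * ((n : ℝ) / m n + (n : ℝ)⁻¹))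
      atTop (𝓝 0) := by simpa using (hw.add hp).const_mul (6 * C + 3 * C ^ 2 + C ^ 3)
  have hvar : Tendsto (fun n : ℕ => (C + C ^ 2) * (3 * (141 + 63 * C + 9 * C ^ 2)) *
      ((n : ℝ) / m n)) atTop (𝓝 0) := by
    simpa using hw.const_mul ((C + C ^ 2) * (3 * (141 + 63 * C + 9 * C ^ 2)))
  refine ⟨squeeze_zero_norm' ?_ hmean, squeeze_zero_norm' ?_ hvar, squeeze_zero_norm' ?_ hmean,
    squeeze_zero_norm' ?_ hvar⟩
  · filter_upwards [hall] with n h using h.1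
  · filter_upwards [hall] with n h using h.2.1
  · filter_upwards [hall] with n h using h.2.2.1
  · filter_upwards [hall] with n h using h.2.2.2
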